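/- arXiv:2202.04535 — 2 statements merged into one kernel-verified Lean document; each statement's English description precedes it below -/
import Mathlib

section
/- Let P_1,…,P_m ∈ ℤ[x,y] be polynomials in two variables each of degree at least 1. The following are equivalent: (1) the system P_1(x,y) = 0, …, P_m(x,y) = 0 is infinitely partition regular over the positive integers; (2) the polynomial x − y divides P_i in ℤ[x,y] for every i ∈ {1,…,m}. -/
open MvPolynomial

theorem greedy_aux (R : ℕ → ℕ → Prop) (K : ℕ)
    (h : ∀ n, ∃ s : Finset ℕ, s.card ≤ K ∧ ∀ a < n, R a n → a ∈ s) :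
    ∃ c : ℕ → Fin (K + 1), ∀ n, ∀ a < n, R a n → c a ≠ c n := by
  classical
  have key : ∀ (n : ℕ) (f : ∀ a, a < n → Fin (K + 1)),
      ∃ k : Fin (K + 1), ∀ a (ha : a < n), R a n → f a ha ≠ k := by
    intro n f
    obtain ⟨s, hs, hR⟩ := h n
    let g : ℕ → Fin (K + 1) := fun a => if ha : a < n then f a ha else 0
    have : ∃ k, k ∉ s.image g := by
      by_contra! hk
      have h1 : (Finset.univ : Finset (Fin (K + 1))) ⊆ s.image g := fun k _ => hk k
      have h2 := Finset.card_le_card h1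
      have h3 := Finset.card_image_le (s := s) (f := g)
      simp only [Finset.card_univ, Fintype.card_fin] at h2
      omega
    obtain ⟨k, hk⟩ := this
    refine ⟨k, fun a ha hr he => hk ?_⟩
    refine Finset.mem_image.2 ⟨a, hR a ha hr, ?_⟩
    simp only [g, dif_pos ha, he]
  choose F hF using key
  refine ⟨fun n => WellFounded.fix (Nat.lt_wfRel.wf) F n, fun n a ha hr => ?_⟩
  beta_reduce
  conv_rhs => rw [WellFounded.fix_eq]
  exact hF n (fun a _ => WellFounded.fix (Nat.lt_wfRel.wf) F a) a ha hr

theorem one_var_aux (L : MvPolynomial (Fin 1) ℤ) (hL : L ≠ 0) :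
    {y : ℤ | eval ![y] L = 0}.Finite := by
  have hinj : Function.Injective (eval (![] : Fin 0 → ℤ)) := by
    intro p q h
    apply MvPolynomial.funext
    intro x
    rwa [Subsingleton.elim x ![]]
  have hne : Polynomial.map (eval (![] : Fin 0 → ℤ)) (finSuccEquiv ℤ 0 L) ≠ 0 := by
    rw [Ne, Polynomial.map_eq_zero_iff hinj]
    simpa using hL
  refine (Polynomial.finite_setOf_isRoot hne).subset ?_
  intro y hy
  have := eval_eq_eval_mv_eval' (![] : Fin 0 → ℤ) y L
  simp only [Set.mem_setOf_eq] at hy ⊢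
  rw [Polynomial.IsRoot, ← this]
  exact hy

theorem two_var_aux (P : MvPolynomial (Fin 2) ℤ) (hP : P ≠ 0) :
    ∃ K : ℕ, ∀ n : ℕ, ∃ s : Finset ℕ, s.card ≤ K ∧
      ∀ a < n, eval ![(a : ℤ), (n : ℤ)] P = 0 → a ∈ s := by
  classical
  set F := finSuccEquiv ℤ 1 P with hFdef
  have hF : F ≠ 0 := by simpa [hFdef] using hP
  have hfin := one_var_aux F.leadingCoeff (by simpa using hF)
  have hfin2 : {n : ℕ | eval ![(n : ℤ)] F.leadingCoeff = 0}.Finite :=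
    hfin.preimage (f := fun n : ℕ => (n : ℤ)) (Nat.cast_injective.injOn)
  obtain ⟨N, hN⟩ := hfin2.bddAbove
  refine ⟨N + F.natDegree, fun n => ?_⟩
  by_cases hn : eval ![(n : ℤ)] F.leadingCoeff = 0
  · have : n ≤ N := hN hn
    exact ⟨Finset.range n, by simp; omega, fun a ha _ => by simpa using ha⟩
  · set q := Polynomial.map (eval ![(n : ℤ)]) F with hq
    have hq0 : q ≠ 0 := by
      intro h0
      apply hn
      have := congrArg (fun p => Polynomial.coeff p F.natDegree) h0
      simpa [hq, Polynomial.coeff_map] using this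
    refine ⟨q.roots.toFinset.preimage (fun n : ℕ => (n : ℤ)) Nat.cast_injective.injOn, ?_, ?_⟩
    · calc _ ≤ q.roots.toFinset.card :=
            Finset.card_le_card_of_injOn (fun n : ℕ => (n : ℤ)) (fun a ha => by simpa using ha)
              Nat.cast_injective.injOn
        _ ≤ Multiset.card q.roots := Multiset.toFinset_card_le _
        _ ≤ q.natDegree := Polynomial.card_roots' q
        _ ≤ F.natDegree := Polynomial.natDegree_map_le
        _ ≤ _ := by omega
    · intro a _ ha
      have h1 := eval_eq_eval_mv_eval' (![(n : ℤ)]) (a : ℤ) P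
      rw [Finset.mem_preimage, Multiset.mem_toFinset, Polynomial.mem_roots hq0,
        Polynomial.IsRoot, hq, hFdef, ← h1]
      exact ha

theorem dvd_aux (P : MvPolynomial (Fin 2) ℤ)
    (h : aeval (fun _ : Fin 2 => (Polynomial.X : Polynomial ℤ)) P = 0) :
    (X 0 - X 1 : MvPolynomial (Fin 2) ℤ) ∣ P := by
  let I := Ideal.span {(X 0 - X 1 : MvPolynomial (Fin 2) ℤ)}
  have e : ((Ideal.Quotient.mkₐ ℤ I).comp (Polynomial.aeval (X 0))).comp
      (aeval (fun _ : Fin 2 => (Polynomial.X : Polynomial ℤ))) = Ideal.Quotient.mkₐ ℤ I := by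
    apply MvPolynomial.algHom_ext
    intro i
    fin_cases i
    · simp
    · simp only [AlgHom.comp_apply, aeval_X, Polynomial.aeval_X, Ideal.Quotient.mkₐ_eq_mk]
      exact Ideal.Quotient.eq.2 (Ideal.mem_span_singleton_self _)
  have := DFunLike.congr_fun e P
  rw [AlgHom.comp_apply, h, map_zero] at this
  rw [← Ideal.mem_span_singleton]
  exact Ideal.Quotient.eq_zero_iff_mem.1 this.symm

theorem diag_aux (P : MvPolynomial (Fin 2) ℤ) (a : ℤ) :
    (aeval (fun _ : Fin 2 => (Polynomial.X : Polynomial ℤ)) P).eval a = eval ![a, a] P := by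
  have e : (Polynomial.aeval a).comp
      (aeval (fun _ : Fin 2 => (Polynomial.X : Polynomial ℤ))) = aeval (R := ℤ) ![a, a] := by
    apply MvPolynomial.algHom_ext
    intro i
    fin_cases i <;> simp
  have := DFunLike.congr_fun e P
  simpa [Polynomial.coe_aeval_eq_eval, aeval_eq_eval] using this

/-- A system of polynomial equations `P₁(x,y) = 0, …, P_m(x,y) = 0` with `Pᵢ ∈ ℤ[x,y]`
nonconstant is infinitely partition regular over the positive integers if and only if
`x - y` divides every `Pᵢ` in `ℤ[x,y]`. -/
theorem stmt_6 (m : ℕ) (P : Fin m → MvPolynomial (Fin 2) ℤ)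
    (hdeg : ∀ i, 1 ≤ (P i).totalDegree) :
    (∀ (r : ℕ) (c : ℕ → Fin r),
        {p : ℕ × ℕ | 0 < p.1 ∧ 0 < p.2 ∧ c p.1 = c p.2 ∧
          ∀ i, eval ![(p.1 : ℤ), (p.2 : ℤ)] (P i) = 0}.Infinite) ↔
      ∀ i, (X 0 - X 1 : MvPolynomial (Fin 2) ℤ) ∣ P i := by
  classical
  constructor
  · intro H i
    by_contra hnd
    set Q := P i with hQ
    have hQ0 : Q ≠ 0 := fun h => hnd (h ▸ dvd_zero _)
    have hD : aeval (fun _ : Fin 2 => (Polynomial.X : Polynomial ℤ)) Q ≠ 0 :=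
      fun h => hnd (dvd_aux Q h)
    obtain ⟨K1, h1⟩ := two_var_aux Q hQ0
    have hS0 : rename (Equiv.swap (0 : Fin 2) 1) Q ≠ 0 := by
      rw [Ne, map_eq_zero_iff _ (rename_injective _ (Equiv.injective _))]
      exact hQ0
    have hS : ∀ a b : ℤ, eval ![a, b] (rename (Equiv.swap (0 : Fin 2) 1) Q) = eval ![b, a] Q := by
      intro a b
      rw [eval_rename]
      congr 2
      funext j
      fin_cases j <;> simp
    obtain ⟨K2, h2⟩ := two_var_aux _ hS0
    obtain ⟨c, hc⟩ := greedy_aux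
      (fun a n => eval ![(a : ℤ), (n : ℤ)] Q = 0 ∨ eval ![(n : ℤ), (a : ℤ)] Q = 0) (K1 + K2) (by
        intro n
        obtain ⟨s, hs, hs'⟩ := h1 n
        obtain ⟨t, ht, ht'⟩ := h2 n
        refine ⟨s ∪ t, (Finset.card_union_le s t).trans (by omega), ?_⟩
        rintro a ha (h | h)
        · exact Finset.mem_union_left _ (hs' a ha h)
        · exact Finset.mem_union_right _ (ht' a ha (by rw [hS]; exact h)))
    apply H _ c
    have hfin : {n : ℕ | (aeval (fun _ : Fin 2 => (Polynomial.X : Polynomial ℤ)) Q).IsRoot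
        (n : ℤ)}.Finite :=
      (Polynomial.finite_setOf_isRoot hD).preimage (f := fun n : ℕ => (n : ℤ))
        (Nat.cast_injective.injOn)
    refine (hfin.image (fun n => (n, n))).subset ?_
    rintro ⟨a, b⟩ ⟨-, -, hcc, hP⟩
    have hab := hP i
    simp only at hab hcc
    rcases lt_trichotomy a b with hlt | rfl | hlt
    · exact absurd hcc (hc b a hlt (Or.inl hab))
    · refine ⟨a, ?_, rfl⟩
      rw [Set.mem_setOf_eq, Polynomial.IsRoot, diag_aux]
      exact hab
    · exact absurd hcc.symm (hc a b hlt (Or.inr hab))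
  · intro H r c
    refine Set.infinite_of_injective_forall_mem (f := fun n : ℕ => (n + 1, n + 1)) ?_ ?_
    · intro a b h
      simpa using h
    · intro n
      refine ⟨Nat.succ_pos _, Nat.succ_pos _, rfl, fun i => ?_⟩
      obtain ⟨q, hq⟩ := H i
      rw [hq]
      simp
end

section
/- Let Γ be a finitely generated subgroup of the multiplicative group ℂˣ of nonzero complex numbers. Then there exist r ∈ ℕ and a coloring c : Γ → {1,…,r} such that there is no c-monochromatic triple x, y, z ∈ Γ with x + y = z (in ℂ). In other words, Schur's equation x + y = z is not partition regular over Γ. -/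
theorem ft_aux {A B : Type*} [CommRing A] [CommRing B] [Algebra ℤ A] [Algebra.FiniteType ℤ A]
    [Algebra ℤ B] (f : A →+* B) (hf : Function.Surjective f) : Algebra.FiniteType ℤ B :=
  let g : A →ₐ[ℤ] B := { f with commutes' := fun n => by simp }
  Algebra.FiniteType.of_surjective g hf

theorem jacobsonInt : IsJacobsonRing ℤ := by
  rw [isJacobsonRing_iff_prime_eq]
  intro P hP
  by_cases h : P = ⊥
  · subst h
    refine le_antisymm ?_ Ideal.le_jacobson
    intro x hx
    rw [Ideal.mem_jacobson_bot] at hx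
    have := hx x
    rw [Int.isUnit_iff] at this
    rw [Ideal.mem_bot]
    rcases this with h | h <;> nlinarith
  · have := hP.isMaximal h
    exact Ideal.jacobson_eq_self_of_isMaximal

theorem finite_field_of_ft (K : Type*) [Field K] [Algebra.FiniteType ℤ K] : Finite K := by
  have := jacobsonInt
  have hf : Module.Finite ℤ K := finite_of_finite_type_of_isJacobsonRing ℤ K
  have hni : ¬ Function.Injective (algebraMap ℤ K) := fun hi =>
    Int.not_isField (isField_of_isIntegral_of_isField hi (Field.toIsField K))
  rw [injective_iff_map_eq_zero] at hni
  push Not at hni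
  obtain ⟨n, hn, hn0⟩ := hni
  have : AddGroup.FG K := Module.Finite.iff_addGroup_fg.mp hf
  refine AddCommGroup.finite_of_fg_isAddTorsion K fun x => ?_
  rw [isOfFinAddOrder_iff_zsmul_eq_zero]
  refine ⟨n, hn0, ?_⟩
  rw [zsmul_eq_mul]
  have : (n : K) = 0 := by simpa using hn
  rw [this, zero_mul]

/-- Schur's equation `x + y = z` is not partition regular over any finitely generated
multiplicative subgroup `Γ` of `ℂˣ`: there is a finite coloring of `Γ` with no
monochromatic triple `x, y, z` satisfying `x + y = z` in `ℂ`. -/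
theorem stmt_11 (Γ : Subgroup ℂˣ) (hΓ : Γ.FG) :
    ∃ (r : ℕ) (c : Γ → Fin r), ¬∃ x y z : Γ,
      c x = c y ∧ c y = c z ∧
      ((x : ℂˣ) : ℂ) + ((y : ℂˣ) : ℂ) = ((z : ℂˣ) : ℂ) := by
  have hG : Group.FG Γ := (Group.fg_iff_subgroup_fg Γ).mpr hΓ
  have hM : Monoid.FG Γ := Group.fg_iff_monoid_fg.mp hG
  let φ : MonoidAlgebra ℤ Γ →ₐ[ℤ] ℂ :=
    MonoidAlgebra.lift ℤ ℂ Γ ((Units.coeHom ℂ).comp Γ.subtype)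
  obtain ⟨M, hM, hle⟩ := Ideal.exists_le_maximal (RingHom.ker φ) (RingHom.ker_ne_top φ)
  let _ : Field (MonoidAlgebra ℤ Γ ⧸ M) := Ideal.Quotient.field M
  have hfin : Finite (MonoidAlgebra ℤ Γ ⧸ M) := by
    refine @finite_field_of_ft _ _ ?_
    exact @ft_aux (MonoidAlgebra ℤ Γ) _ _ _ MonoidAlgebra.algebra inferInstance _
      (Ideal.Quotient.mk M) Ideal.Quotient.mk_surjective
  obtain ⟨r, ⟨e⟩⟩ := Finite.exists_equiv_fin (MonoidAlgebra ℤ Γ ⧸ M)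
  let g : Γ →* (MonoidAlgebra ℤ Γ ⧸ M) :=
    (Ideal.Quotient.mk M : MonoidAlgebra ℤ Γ →* _).comp (MonoidAlgebra.of ℤ Γ)
  refine ⟨r, fun x => e (g x), ?_⟩
  rintro ⟨x, y, z, hxy, hyz, h⟩
  have hxy := e.injective hxy
  have hyz := e.injective hyz
  have key : g x + g y = g z := by
    change Ideal.Quotient.mk M _ + Ideal.Quotient.mk M _ = Ideal.Quotient.mk M _
    rw [← map_add, Ideal.Quotient.eq]
    apply hle
    rw [RingHom.mem_ker, map_sub, map_add]
    simp only [φ, MonoidAlgebra.lift_of]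
    simpa [sub_eq_zero] using h
  rw [hxy, hyz] at key
  have h0 : g z = 0 := by simpa using key
  have hu : IsUnit (g z) := (Group.isUnit z).map g
  exact hu.ne_zero h0
end
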